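/- Let 0 < α < n, p > 1 (with p ≤ n/α), and let w ∈ 𝓛^{α,p} be nonnegative. Then the Kerman–Sawyer quantity sup over dyadic cubes Q of (∫_Q w)^{-1} ∫_Q∫_Q w(x)w(y)|x−y|^{α−n} dx dy is bounded by C ‖w‖_{𝓛^{α,p}} with C depending only on n, α, p. -/

import Mathlib

open MeasureTheory ENNReal Metric Set Filter
open scoped FourierTransform
noncomputable section

abbrev Euc (n : ℕ) := EuclideanSpace ℝ (Fin n)

/-- The axis-parallel cube with corner `a` and side length `s`. -/
def cube {n : ℕ} (a : Fin n → ℝ) (s : ℝ) : Set (Euc n) :=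
  {x | ∀ i, a i ≤ x i ∧ x i ≤ a i + s}

/-- The Morrey norm `‖V‖_{𝓛^{α,p}} = sup_Q |Q|^{α/n} ((1/|Q|)∫_Q V^p)^{1/p}`. -/
def morrey (n : ℕ) (α p : ℝ) (V : Euc n → ℝ) : ℝ≥0∞ :=
  ⨆ (a : Fin n → ℝ) (s : ℝ) (_ : 0 < s),
    volume (cube a s) ^ (α / n) *
      ((volume (cube a s))⁻¹ * ∫⁻ y in cube a s, ENNReal.ofReal (V y ^ p)) ^ (1 / p)

/-- The Kerman–Sawyer quantity: sup over dyadic cubes `Q` of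
`(∫_Q w)⁻¹ ∫_Q ∫_Q w(x) w(y) |x-y|^{α-n} dx dy`. -/
def ksQ (n : ℕ) (α : ℝ) (w : Euc n → ℝ) : ℝ≥0∞ :=
  ⨆ (k : ℤ) (m : Fin n → ℤ),
    (∫⁻ x in cube (fun i => (2 : ℝ) ^ k * m i) ((2 : ℝ) ^ k), ENNReal.ofReal (w x))⁻¹ *
      ∫⁻ x in cube (fun i => (2 : ℝ) ^ k * m i) ((2 : ℝ) ^ k),
        ∫⁻ y in cube (fun i => (2 : ℝ) ^ k * m i) ((2 : ℝ) ^ k),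
          ENNReal.ofReal (w x) * ENNReal.ofReal (w y) * ENNReal.ofReal ‖x - y‖ ^ (α - n)

/-!
Fix `θ = 1 / p` and let `U = I_α (w ^ p)`. Schur's test with weight `U ^ (1 - θ)` reduces the
double integral over `Q × Q` to the pointwise inequality
`I_α (w * U ^ (1 - θ)) ≤ C * ‖w‖ * U ^ (1 - θ)`. As `U` has the `A₁` property, and `w ^ p` and hence
`U` satisfy Morrey bounds, Hölder's inequality on `ball x r` bounds the integral of
`w * U ^ (1 - θ)` there in two ways: by a multiple of `U x`, which is efficient for small `r`, and
by a multiple of `‖w‖ ^ p`, which is efficient for large `r`. Splitting `I_α` at the radius where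
the two bounds agree, as in Hedberg's inequality, gives the pointwise inequality.
-/

section Powers

lemma ofReal_rpow_add {t : ℝ} (ht : 0 < t) (a b : ℝ) :
    ENNReal.ofReal t ^ (a + b) = ENNReal.ofReal t ^ a * ENNReal.ofReal t ^ b :=
  ENNReal.rpow_add a b (by simpa using ht) ofReal_ne_top

lemma rpow_neg_le_rpow_neg {a b : ℝ≥0∞} {d : ℝ} (hd : 0 ≤ d) (h : a ≤ b) :
    b ^ (-d) ≤ a ^ (-d) := by
  rw [ENNReal.rpow_neg, ENNReal.rpow_neg, ENNReal.inv_le_inv]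
  exact ENNReal.rpow_le_rpow h hd

lemma lintegral_Ioc_rpow_sub_one {a r : ℝ} (ha : 0 < a) (hr : 0 ≤ r) :
    ∫⁻ t in Ioc 0 r, ENNReal.ofReal t ^ (a - 1) = ENNReal.ofReal a⁻¹ * ENNReal.ofReal r ^ a := by
  have integrable : IntegrableOn (fun t : ℝ => t ^ (a - 1)) (Ioc 0 r) :=
    (intervalIntegrable_iff_integrableOn_Ioc_of_le hr).1
      (intervalIntegral.intervalIntegrable_rpow' (by linarith))
  have nonneg : ∀ᵐ t ∂volume.restrict (Ioc 0 r), 0 ≤ t ^ (a - 1) := by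
    filter_upwards [self_mem_ae_restrict measurableSet_Ioc] with t ht
    exact Real.rpow_nonneg ht.1.le _
  calc ∫⁻ t in Ioc 0 r, ENNReal.ofReal t ^ (a - 1)
      = ∫⁻ t in Ioc 0 r, ENNReal.ofReal (t ^ (a - 1)) :=
        setLIntegral_congr_fun measurableSet_Ioc fun t ht => ofReal_rpow_of_pos ht.1
    _ = ENNReal.ofReal (∫ t in (0 : ℝ)..r, t ^ (a - 1)) := by
        rw [← ofReal_integral_eq_lintegral_ofReal integrable nonneg,
          intervalIntegral.integral_of_le hr]
    _ = ENNReal.ofReal (a⁻¹ * r ^ a) := by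
        rw [integral_rpow (Or.inl (by linarith)), sub_add_cancel, Real.zero_rpow ha.ne', sub_zero,
          div_eq_inv_mul]
    _ = ENNReal.ofReal a⁻¹ * ENNReal.ofReal r ^ a := by
        rw [ENNReal.ofReal_mul (by positivity), ENNReal.ofReal_rpow_of_nonneg hr ha.le]

lemma lintegral_Ioi_rpow_neg_sub_one_of_pos {a r : ℝ} (ha : 0 < a) (hr : 0 < r) :
    ∫⁻ t in Ioi r, ENNReal.ofReal t ^ (-a - 1) =
      ENNReal.ofReal a⁻¹ * ENNReal.ofReal r ^ (-a) := by
  have nonneg : ∀ᵐ t ∂volume.restrict (Ioi r), 0 ≤ t ^ (-a - 1) := by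
    filter_upwards [self_mem_ae_restrict measurableSet_Ioi] with t ht
    exact Real.rpow_nonneg (hr.trans ht).le _
  calc ∫⁻ t in Ioi r, ENNReal.ofReal t ^ (-a - 1)
      = ∫⁻ t in Ioi r, ENNReal.ofReal (t ^ (-a - 1)) :=
        setLIntegral_congr_fun measurableSet_Ioi fun t ht => ofReal_rpow_of_pos (hr.trans ht)
    _ = ENNReal.ofReal (∫ t in Ioi r, t ^ (-a - 1)) :=
        (ofReal_integral_eq_lintegral_ofReal
          (integrableOn_Ioi_rpow_of_lt (by linarith) hr) nonneg).symm
    _ = ENNReal.ofReal (a⁻¹ * r ^ (-a)) := by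
        rw [integral_Ioi_rpow_of_lt (by linarith) hr, sub_add_cancel, neg_div_neg_eq,
          div_eq_inv_mul]
    _ = ENNReal.ofReal a⁻¹ * ENNReal.ofReal r ^ (-a) := by
        rw [ENNReal.ofReal_mul (by positivity), ofReal_rpow_of_pos hr]

lemma lintegral_Ioi_zero_rpow (s : ℝ) : ∫⁻ t in Ioi (0 : ℝ), ENNReal.ofReal t ^ s = ⊤ := by
  by_contra finite
  refine not_integrableOn_Ioi_rpow s ⟨by fun_prop, ?_⟩
  rw [hasFiniteIntegral_iff_enorm, lt_top_iff_ne_top]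
  convert finite using 1
  refine setLIntegral_congr_fun measurableSet_Ioi fun t ht => ?_
  rw [Real.enorm_of_nonneg (Real.rpow_nonneg (le_of_lt ht) s), ofReal_rpow_of_pos ht]

lemma lintegral_Ioi_rpow_neg_sub_one {a r : ℝ} (ha : 0 < a) (hr : 0 ≤ r) :
    ∫⁻ t in Ioi r, ENNReal.ofReal t ^ (-a - 1) =
      ENNReal.ofReal a⁻¹ * ENNReal.ofReal r ^ (-a) := by
  rcases hr.eq_or_lt with rfl | hr
  · rw [lintegral_Ioi_zero_rpow, ofReal_zero, ENNReal.zero_rpow_of_neg (neg_lt_zero.2 ha),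
      ENNReal.mul_top (by simpa using ha)]
  · exact lintegral_Ioi_rpow_neg_sub_one_of_pos ha hr

lemma exists_mul_rpow_eq_mul_rpow_neg {A B : ℝ≥0∞} {a b : ℝ} (hA0 : A ≠ 0) (hA : A ≠ ⊤)
    (hB0 : B ≠ 0) (hB : B ≠ ⊤) (hab : 0 < a + b) :
    ∃ r : ℝ, 0 < r ∧ A * ENNReal.ofReal r ^ a = A ^ (b / (a + b)) * B ^ (a / (a + b)) ∧
      B * ENNReal.ofReal r ^ (-b) = A ^ (b / (a + b)) * B ^ (a / (a + b)) := by
  have ratio_ne_zero : B / A ≠ 0 := ENNReal.div_ne_zero.2 ⟨hB0, hA⟩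
  have ratio_ne_top : B / A ≠ ⊤ := ENNReal.div_ne_top hB hA0
  have hρ : (B / A) ^ (1 / (a + b)) ≠ ⊤ := rpow_ne_top_of_ne_zero ratio_ne_zero ratio_ne_top
  have rpow_ratio (c : ℝ) :
      ENNReal.ofReal ((B / A) ^ (1 / (a + b))).toReal ^ c =
        B ^ (c / (a + b)) * A ^ (-c / (a + b)) := by
    rw [ofReal_toReal hρ, ← ENNReal.rpow_mul, div_eq_mul_inv, ENNReal.mul_rpow_of_ne_top hB
      (ENNReal.inv_ne_top.2 hA0), ENNReal.inv_rpow, ← ENNReal.rpow_neg]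
    ring_nf
  refine ⟨((B / A) ^ (1 / (a + b))).toReal,
    toReal_pos (by simp [ENNReal.rpow_eq_zero_iff, ratio_ne_zero, ratio_ne_top]) hρ, ?_, ?_⟩
  · rw [rpow_ratio, mul_left_comm, mul_comm, mul_comm A]
    nth_rw 2 [← ENNReal.rpow_one A]
    rw [← ENNReal.rpow_add _ _ hA0 hA]
    congr 2
    field_simp
    ring
  · rw [rpow_ratio, ← mul_assoc, mul_comm, neg_neg]
    nth_rw 1 [← ENNReal.rpow_one B]
    rw [← ENNReal.rpow_add _ _ hB0 hB]
    congr 2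
    field_simp
    ring

end Powers

section SchurTest

lemma two_le_div_add_div {a b : ℝ≥0∞} (ha0 : a ≠ 0) (ha : a ≠ ⊤) (hb0 : b ≠ 0) (hb : b ≠ ⊤) :
    2 ≤ a / b + b / a := by
  lift a to NNReal using ha
  lift b to NNReal using hb
  simp only [ne_eq, ENNReal.coe_eq_zero] at ha0 hb0
  rw [← ENNReal.coe_div hb0, ← ENNReal.coe_div ha0]
  norm_cast
  rw [div_add_div _ _ hb0 ha0, le_div_iff₀ (by positivity), ← mul_assoc, ← sq, ← sq, add_comm]
  exact two_mul_le_add_sq b a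

variable {X : Type*} [MeasurableSpace X] {σ : Measure X} [SFinite σ] {K : X → X → ℝ≥0∞}
  {h : X → ℝ≥0∞}

lemma lintegral_lintegral_le_of_symm_of_pos (hK : Measurable (Function.uncurry K))
    (hK_symm : ∀ x y, K x y = K y x) (hh : Measurable h) (hh_zero : ∀ᵐ x ∂σ, h x ≠ 0)
    (hh_top : ∀ᵐ x ∂σ, h x ≠ ⊤) :
    ∫⁻ x, ∫⁻ y, K x y ∂σ ∂σ ≤ ∫⁻ x, ∫⁻ y, K x y * (h y / h x) ∂σ ∂σ := by
  set G : X → X → ℝ≥0∞ := fun x y => K x y * (h y / h x)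
  have hG : Measurable (Function.uncurry G) :=
    hK.mul ((hh.comp measurable_snd).div (hh.comp measurable_fst))
  have inner_measurable : Measurable fun x => ∫⁻ y, G x y ∂σ := hG.lintegral_prod_right'
  have swap : ∫⁻ x, ∫⁻ y, G y x ∂σ ∂σ = ∫⁻ x, ∫⁻ y, G x y ∂σ ∂σ :=
    lintegral_lintegral_swap (hG.comp measurable_swap).aemeasurable
  have double_le : 2 * ∫⁻ x, ∫⁻ y, K x y ∂σ ∂σ ≤ 2 * ∫⁻ x, ∫⁻ y, G x y ∂σ ∂σ :=
    calc 2 * ∫⁻ x, ∫⁻ y, K x y ∂σ ∂σ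
        = ∫⁻ x, ∫⁻ y, K x y * 2 ∂σ ∂σ := by
          simp_rw [lintegral_mul_const' 2 _ ofNat_ne_top]
          exact mul_comm _ _
      _ ≤ ∫⁻ x, ∫⁻ y, (G x y + G y x) ∂σ ∂σ := by
          refine lintegral_mono_ae ?_
          filter_upwards [hh_zero, hh_top] with x hx0 hx
          refine lintegral_mono_ae ?_
          filter_upwards [hh_zero, hh_top] with y hy0 hy
          simp only [G]
          rw [hK_symm y x, ← mul_add]
          gcongr
          exact two_le_div_add_div hy0 hy hx0 hx
      _ = 2 * ∫⁻ x, ∫⁻ y, G x y ∂σ ∂σ := by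
          have inner_add (x : X) : ∫⁻ y, (G x y + G y x) ∂σ = ∫⁻ y, G x y ∂σ + ∫⁻ y, G y x ∂σ :=
            lintegral_add_left hG.of_uncurry_left _
          simp_rw [inner_add]
          rw [lintegral_add_left inner_measurable, swap, two_mul]
  exact (ENNReal.mul_le_mul_iff_right two_ne_zero ofNat_ne_top).1 double_le

lemma lintegral_lintegral_le_of_schur (hK : Measurable (Function.uncurry K))
    (hK_symm : ∀ x y, K x y = K y x) (hh : Measurable h) (hh_zero : ∀ᵐ x ∂σ, h x ≠ 0)
    (hh_top : ∀ᵐ x ∂σ, h x ≠ ⊤) {C : ℝ≥0∞}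
    (hC : ∀ x, ∫⁻ y, K x y * h y ∂σ ≤ C * h x) :
    ∫⁻ x, ∫⁻ y, K x y ∂σ ∂σ ≤ C * σ univ :=
  calc ∫⁻ x, ∫⁻ y, K x y ∂σ ∂σ
      ≤ ∫⁻ x, ∫⁻ y, K x y * (h y / h x) ∂σ ∂σ :=
        lintegral_lintegral_le_of_symm_of_pos hK hK_symm hh hh_zero hh_top
    _ ≤ ∫⁻ _, C ∂σ := by
        refine lintegral_mono_ae ?_
        filter_upwards [hh_zero] with x hx0
        simp_rw [div_eq_mul_inv, ← mul_assoc]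
        rw [lintegral_mul_const' _ _ (ENNReal.inv_ne_top.2 hx0), ← div_eq_mul_inv]
        exact ENNReal.div_le_of_le_mul (hC x)
    _ = C * σ univ := lintegral_const C

end SchurTest

/-- The Riesz potential `∫ |x - y| ^ (-d) dν(y)`, normalised by the exponent `-d` of the kernel:
in dimension `n` and of order `α`, `d = n - α`. The value of the kernel on the diagonal is `⊤`. -/
def rieszPotential {X : Type*} [PseudoEMetricSpace X] [MeasurableSpace X] (d : ℝ) (ν : Measure X)
    (x : X) : ℝ≥0∞ :=
  ∫⁻ y, edist x y ^ (-d) ∂ν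

/-- The Riesz potential with the singularity of its kernel cut off at distance `r`. -/
def truncatedRieszPotential {X : Type*} [PseudoEMetricSpace X] [MeasurableSpace X] (d r : ℝ)
    (ν : Measure X) (x : X) : ℝ≥0∞ :=
  ∫⁻ y, max (edist x y) (ENNReal.ofReal r) ^ (-d) ∂ν

/-- The growth condition `ν (ball x r) ≤ A r ^ s` for all `r > 0`: upper Ahlfors regularity at `x`,
or a Morrey bound when `ν` has a density. -/
def BallGrowthAt {X : Type*} [PseudoMetricSpace X] [MeasurableSpace X] (ν : Measure X) (x : X)
    (A : ℝ≥0∞) (s : ℝ) : Prop :=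
  ∀ r : ℝ, 0 < r → ν (ball x r) ≤ A * ENNReal.ofReal r ^ s

section Potentials

variable {X : Type*} [PseudoMetricSpace X] [MeasurableSpace X] {ν : Measure X} {x : X}
  {A B : ℝ≥0∞} {a b d r s : ℝ}

lemma BallGrowthAt.eq_zero (h : BallGrowthAt ν x 0 s) : ν = 0 := by
  rw [← Measure.measure_univ_eq_zero, ← iUnion_ball_nat_succ x, measure_iUnion_null_iff]
  intro k
  simpa using h (k + 1) (by positivity)

lemma BallGrowthAt.restrict (h : BallGrowthAt ν x A s) (t : Set X) :
    BallGrowthAt (ν.restrict t) x A s :=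
  fun r hr => (Measure.restrict_apply_le t _).trans (h r hr)

lemma ballGrowthAt_zero (h : ν univ ≤ A) : BallGrowthAt ν x A 0 := fun r _ => by
  simpa using (measure_mono (subset_univ (ball x r))).trans h

lemma truncatedRieszPotential_zero : truncatedRieszPotential d 0 ν x = rieszPotential d ν x := by
  simp only [truncatedRieszPotential, rieszPotential, ofReal_zero, zero_le, max_eq_left]

lemma truncatedRieszPotential_le_rieszPotential (hd : 0 ≤ d) :
    truncatedRieszPotential d r ν x ≤ rieszPotential d ν x :=
  lintegral_mono fun _ => rpow_neg_le_rpow_neg hd (le_max_left _ _)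

lemma rieszPotential_restrict_le_of_le_edist {t : Set X} {ρ : ℝ≥0∞} (hd : 0 ≤ d)
    (ht : MeasurableSet t) (h : ∀ y ∈ t, ρ ≤ edist x y) :
    rieszPotential d (ν.restrict t) x ≤ ν t * ρ ^ (-d) :=
  calc rieszPotential d (ν.restrict t) x
      ≤ ∫⁻ _ in t, ρ ^ (-d) ∂ν :=
        setLIntegral_mono' ht fun y hy => rpow_neg_le_rpow_neg hd (h y hy)
    _ = ν t * ρ ^ (-d) := by rw [setLIntegral_const, mul_comm]

lemma ballGrowthAt_rieszPotential [OpensMeasurableSpace X] (hd : 0 ≤ d) :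
    BallGrowthAt ν x (rieszPotential d ν x) d := fun r hr => by
  have kernel_ge : ENNReal.ofReal r ^ (-d) * ν (ball x r) ≤ rieszPotential d ν x :=
    calc ENNReal.ofReal r ^ (-d) * ν (ball x r)
        = ∫⁻ _ in ball x r, ENNReal.ofReal r ^ (-d) ∂ν := (setLIntegral_const _ _).symm
      _ ≤ ∫⁻ y in ball x r, edist x y ^ (-d) ∂ν := by
          refine setLIntegral_mono' measurableSet_ball fun y hy => ?_
          rw [edist_dist, dist_comm]
          exact rpow_neg_le_rpow_neg hd (ofReal_le_ofReal (le_of_lt hy))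
      _ ≤ rieszPotential d ν x := setLIntegral_le_lintegral _ _
  calc ν (ball x r) = ENNReal.ofReal r ^ (-d) * ν (ball x r) * ENNReal.ofReal r ^ d := by
        rw [mul_right_comm, ← ofReal_rpow_add hr, neg_add_cancel, ENNReal.rpow_zero, one_mul]
    _ ≤ rieszPotential d ν x * ENNReal.ofReal r ^ d := by gcongr

lemma eq_zero_of_rieszPotential_eq_zero [OpensMeasurableSpace X] (hd : 0 ≤ d)
    (h : rieszPotential d ν x = 0) : ν = 0 :=
  (h ▸ ballGrowthAt_rieszPotential hd : BallGrowthAt ν x 0 d).eq_zero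

lemma lintegral_Ioi_measure_ball_le (hν : BallGrowthAt ν x A (d - b)) (hb : 0 < b) (hr : 0 < r) :
    ∫⁻ t in Ioi r, ENNReal.ofReal t ^ (-d - 1) * ν (ball x t) ≤
      ENNReal.ofReal b⁻¹ * (A * ENNReal.ofReal r ^ (-b)) :=
  calc ∫⁻ t in Ioi r, ENNReal.ofReal t ^ (-d - 1) * ν (ball x t)
      ≤ ∫⁻ t in Ioi r, ENNReal.ofReal t ^ (-b - 1) * A := by
        refine setLIntegral_mono' measurableSet_Ioi fun t ht => ?_
        have exponent : -b - 1 = -d - 1 + (d - b) := by ring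
        rw [exponent, ofReal_rpow_add (hr.trans ht), mul_assoc, mul_comm _ A]
        gcongr
        exact hν t (hr.trans ht)
    _ = ENNReal.ofReal b⁻¹ * (A * ENNReal.ofReal r ^ (-b)) := by
        rw [lintegral_mul_const _ (by fun_prop), lintegral_Ioi_rpow_neg_sub_one hb hr.le,
          mul_assoc, mul_comm A]

lemma lintegral_Ioc_measure_ball_le (hν : BallGrowthAt ν x A (d + a)) (ha : 0 < a) (hr : 0 ≤ r) :
    ∫⁻ t in Ioc 0 r, ENNReal.ofReal t ^ (-d - 1) * ν (ball x t) ≤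
      ENNReal.ofReal a⁻¹ * (A * ENNReal.ofReal r ^ a) :=
  calc ∫⁻ t in Ioc 0 r, ENNReal.ofReal t ^ (-d - 1) * ν (ball x t)
      ≤ ∫⁻ t in Ioc 0 r, ENNReal.ofReal t ^ (a - 1) * A := by
        refine setLIntegral_mono' measurableSet_Ioc fun t ht => ?_
        have exponent : a - 1 = -d - 1 + (d + a) := by ring
        rw [exponent, ofReal_rpow_add ht.1, mul_assoc, mul_comm _ A]
        gcongr
        exact hν t ht.1
    _ = ENNReal.ofReal a⁻¹ * (A * ENNReal.ofReal r ^ a) := by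
        rw [lintegral_mul_const _ (by fun_prop), lintegral_Ioc_rpow_sub_one ha hr,
          mul_assoc, mul_comm A]

variable [OpensMeasurableSpace X] [SecondCountableTopology X]

lemma measurable_rieszPotential [SFinite ν] : Measurable (rieszPotential d ν) :=
  (measurable_edist.pow_const (-d)).lintegral_prod_right'

lemma truncatedRieszPotential_eq_lintegral_measure_ball [SFinite ν] (hd : 0 < d) (hr : 0 ≤ r) :
    truncatedRieszPotential d r ν x =
      ENNReal.ofReal d * ∫⁻ t in Ioi r, ENNReal.ofReal t ^ (-d - 1) * ν (ball x t) := by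
  set S : Set (X × ℝ) := {q | dist q.1 x < q.2}
  have hS : MeasurableSet S := measurableSet_lt (by fun_prop) measurable_snd
  set F : X → ℝ → ℝ≥0∞ := fun y t => S.indicator (fun q => ENNReal.ofReal q.2 ^ (-d - 1)) (y, t)
  have hF : Measurable (Function.uncurry F) := Measurable.indicator (by fun_prop) hS
  have kernel_eq (y : X) : max (edist x y) (ENNReal.ofReal r) ^ (-d) =
      ENNReal.ofReal d * ∫⁻ t in Ioi r, F y t := by
    calc max (edist x y) (ENNReal.ofReal r) ^ (-d)
        = ENNReal.ofReal (max (dist y x) r) ^ (-d) := by rw [edist_dist, dist_comm, ofReal_max]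
      _ = ENNReal.ofReal d * ∫⁻ t in Ioi (max (dist y x) r), ENNReal.ofReal t ^ (-d - 1) := by
          rw [lintegral_Ioi_rpow_neg_sub_one hd (le_max_of_le_right hr), ← mul_assoc,
            ← ENNReal.ofReal_mul hd.le, mul_inv_cancel₀ hd.ne', ofReal_one, one_mul]
      _ = ENNReal.ofReal d * ∫⁻ t in Ioi r, F y t := by
          rw [← Ioi_inter_Ioi, ← setLIntegral_indicator measurableSet_Ioi]
          rfl
  calc truncatedRieszPotential d r ν x
      = ENNReal.ofReal d * ∫⁻ y, (∫⁻ t in Ioi r, F y t) ∂ν := by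
        simp_rw [truncatedRieszPotential, kernel_eq]
        exact lintegral_const_mul' _ _ ofReal_ne_top
    _ = ENNReal.ofReal d * ∫⁻ t in Ioi r, ∫⁻ y, F y t ∂ν := by
        rw [lintegral_lintegral_swap hF.aemeasurable]
    _ = ENNReal.ofReal d * ∫⁻ t in Ioi r, ENNReal.ofReal t ^ (-d - 1) * ν (ball x t) := by
        congr! 3 with t
        exact lintegral_indicator_const (s := ball x t) measurableSet_ball
          (ENNReal.ofReal t ^ (-d - 1))

lemma truncatedRieszPotential_le [SFinite ν] (hν : BallGrowthAt ν x A (d - b)) (hd : 0 < d)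
    (hb : 0 < b) (hr : 0 < r) :
    truncatedRieszPotential d r ν x ≤ ENNReal.ofReal (d / b) * (A * ENNReal.ofReal r ^ (-b)) := by
  rw [truncatedRieszPotential_eq_lintegral_measure_ball hd hr.le, div_eq_mul_inv,
    ENNReal.ofReal_mul hd.le, mul_assoc]
  gcongr
  exact lintegral_Ioi_measure_ball_le hν hb hr

lemma rieszPotential_le_add [SFinite ν] (hA : BallGrowthAt ν x A (d + a))
    (hB : BallGrowthAt ν x B (d - b)) (hd : 0 < d) (ha : 0 < a) (hb : 0 < b) (hr : 0 < r) :
    rieszPotential d ν x ≤ ENNReal.ofReal (d / a) * (A * ENNReal.ofReal r ^ a) +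
      ENNReal.ofReal (d / b) * (B * ENNReal.ofReal r ^ (-b)) := by
  have split : Ioi (0 : ℝ) = Ioc 0 r ∪ Ioi r := (Ioc_union_Ioi_eq_Ioi hr.le).symm
  rw [← truncatedRieszPotential_zero,
    truncatedRieszPotential_eq_lintegral_measure_ball hd le_rfl, split,
    lintegral_union measurableSet_Ioi (Ioc_disjoint_Ioi le_rfl), div_eq_mul_inv, div_eq_mul_inv,
    ENNReal.ofReal_mul hd.le, ENNReal.ofReal_mul hd.le, mul_assoc, mul_assoc, mul_add]
  gcongr
  · exact lintegral_Ioc_measure_ball_le hA ha hr.le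
  · exact lintegral_Ioi_measure_ball_le hB hb hr

-- Hedberg's trick: split the potential at the radius where the two growth bounds agree.
lemma rieszPotential_le_mul_rpow [SFinite ν] (hA : BallGrowthAt ν x A (d + a))
    (hB : BallGrowthAt ν x B (d - b)) (hd : 0 < d) (ha : 0 < a) (hb : 0 < b) :
    rieszPotential d ν x ≤ (ENNReal.ofReal (d / a) + ENNReal.ofReal (d / b)) *
      (A ^ (b / (a + b)) * B ^ (a / (a + b))) := by
  have hC : ENNReal.ofReal (d / a) + ENNReal.ofReal (d / b) ≠ 0 := by
    simp only [ne_eq, add_eq_zero, ofReal_eq_zero, not_and, not_le]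
    exact fun _ => by positivity
  have hab_pos : 0 < b / (a + b) := by positivity
  have hba_pos : 0 < a / (a + b) := by positivity
  by_cases zero : A = 0 ∨ B = 0
  · have hν : ν = 0 := by
      rcases zero with rfl | rfl
      exacts [hA.eq_zero, hB.eq_zero]
    simp only [hν, rieszPotential, lintegral_zero_measure, zero_le]
  push Not at zero
  by_cases top : A = ⊤ ∨ B = ⊤
  · suffices A ^ (b / (a + b)) * B ^ (a / (a + b)) = ⊤ by
      rw [this, ENNReal.mul_top hC]
      exact le_top
    rcases top with rfl | rfl
    · rw [ENNReal.top_rpow_of_pos hab_pos, ENNReal.top_mul]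
      simp [zero.2, hba_pos.le]
    · rw [ENNReal.top_rpow_of_pos hba_pos, ENNReal.mul_top]
      simp [zero.1, hab_pos.le]
  push Not at top
  obtain ⟨r, hr, hAr, hBr⟩ :=
    exists_mul_rpow_eq_mul_rpow_neg zero.1 top.1 zero.2 top.2 (add_pos ha hb)
  calc rieszPotential d ν x
      ≤ ENNReal.ofReal (d / a) * (A * ENNReal.ofReal r ^ a) +
          ENNReal.ofReal (d / b) * (B * ENNReal.ofReal r ^ (-b)) :=
        rieszPotential_le_add hA hB hd ha hb hr
    _ = (ENNReal.ofReal (d / a) + ENNReal.ofReal (d / b)) *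
          (A ^ (b / (a + b)) * B ^ (a / (a + b))) := by rw [hAr, hBr, add_mul]

end Potentials

section MorreySchur

variable {X : Type*} [PseudoMetricSpace X] [MeasurableSpace X] [OpensMeasurableSpace X]
  {μ ν : Measure X} {x : X} {A M M₁ M₂ : ℝ≥0∞} {d n s s₁ s₂ α θ : ℝ} {f g : X → ℝ≥0∞}

lemma BallGrowthAt.ae_ne_top (h : BallGrowthAt (μ.withDensity f) x M s) (hf : Measurable f)
    (hM : M ≠ ⊤) : ∀ᵐ y ∂μ, f y ≠ ⊤ := by
  have on_ball (k : ℕ) : ∀ᵐ y ∂μ.restrict (ball x (k + 1)), f y ≠ ⊤ := by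
    have hk : (0 : ℝ) < k + 1 := by positivity
    have finite : ∫⁻ y in ball x (k + 1), f y ∂μ ≠ ⊤ := by
      rw [← withDensity_apply _ measurableSet_ball]
      exact ne_top_of_le_ne_top (mul_ne_top hM (rpow_ne_top_of_ne_zero (by simpa using hk)
        ofReal_ne_top)) (h _ hk)
    exact (ae_lt_top hf finite).mono fun _ => LT.lt.ne
  simpa [iUnion_ball_nat_succ] using
    (ae_restrict_iUnion_iff (fun k : ℕ => ball x (k + 1)) fun y => f y ≠ ⊤).2 on_ball

lemma BallGrowthAt.withDensity_rpow_mul_rpow (hf : Measurable f) (hg : Measurable g)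
    (h₁ : BallGrowthAt (μ.withDensity f) x M₁ s₁) (h₂ : BallGrowthAt (μ.withDensity g) x M₂ s₂)
    (hθ0 : 0 ≤ θ) (hθ1 : θ ≤ 1) :
    BallGrowthAt (μ.withDensity fun y => f y ^ θ * g y ^ (1 - θ)) x (M₁ ^ θ * M₂ ^ (1 - θ))
      (s₁ * θ + s₂ * (1 - θ)) := fun r hr => by
  have hθ' : 0 ≤ 1 - θ := sub_nonneg.2 hθ1
  calc (μ.withDensity fun y => f y ^ θ * g y ^ (1 - θ)) (ball x r)
      = ∫⁻ y in ball x r, f y ^ θ * g y ^ (1 - θ) ∂μ := withDensity_apply _ measurableSet_ball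
    _ ≤ (∫⁻ y in ball x r, f y ∂μ) ^ θ * (∫⁻ y in ball x r, g y ∂μ) ^ (1 - θ) :=
        ENNReal.lintegral_mul_norm_pow_le hf.aemeasurable hg.aemeasurable hθ0 hθ'
          (add_sub_cancel _ _)
    _ ≤ (M₁ * ENNReal.ofReal r ^ s₁) ^ θ * (M₂ * ENNReal.ofReal r ^ s₂) ^ (1 - θ) := by
        rw [← withDensity_apply _ measurableSet_ball, ← withDensity_apply _ measurableSet_ball]
        gcongr
        exacts [h₁ r hr, h₂ r hr]
    _ = M₁ ^ θ * M₂ ^ (1 - θ) * ENNReal.ofReal r ^ (s₁ * θ + s₂ * (1 - θ)) := by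
        rw [ENNReal.mul_rpow_of_nonneg _ _ hθ0, ENNReal.mul_rpow_of_nonneg _ _ hθ',
          ← ENNReal.rpow_mul, ← ENNReal.rpow_mul, mul_mul_mul_comm, ofReal_rpow_add hr]

/-- A constant for the `A₁` property `⨍_B U ≤ C * inf_B U` of Riesz potentials `U` with exponent `d`
over a measure with `n`-dimensional growth constant `A`. -/
def rieszPotentialAOneConst (A : ℝ≥0∞) (d n : ℝ) : ℝ≥0∞ :=
  2 ^ d * ((ENNReal.ofReal (d / (n - d)) + 1) * A)

lemma rieszPotentialAOneConst_ne_top (hA : A ≠ ⊤) : rieszPotentialAOneConst A d n ≠ ⊤ := by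
  rw [rieszPotentialAOneConst]
  finiteness

lemma rieszPotential_withDensity (hf : Measurable f) :
    rieszPotential d (μ.withDensity f) x = ∫⁻ y, edist x y ^ (-d) * f y ∂μ := by
  rw [rieszPotential, lintegral_withDensity_eq_lintegral_mul _ hf (by fun_prop)]
  exact lintegral_congr fun y => mul_comm _ _

variable [SecondCountableTopology X]

lemma lintegral_rieszPotential_le_of_schur {σ : Measure X} [SFinite σ]
    (hσ : σ ≤ μ.withDensity f) (hf : Measurable f) (hg : Measurable g)
    (hg_zero : ∀ᵐ x ∂σ, g x ≠ 0) (hg_top : ∀ᵐ x ∂σ, g x ≠ ⊤) {C : ℝ≥0∞}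
    (hC : ∀ x, rieszPotential d (μ.withDensity fun y => f y * g y) x ≤ C * g x) :
    ∫⁻ x, rieszPotential d σ x ∂σ ≤ C * σ univ := by
  refine lintegral_lintegral_le_of_schur (measurable_edist.pow_const (-d))
    (fun x y => by rw [edist_comm]) hg hg_zero hg_top fun x => (le_trans ?_ (hC x))
  calc ∫⁻ y, edist x y ^ (-d) * g y ∂σ
      ≤ ∫⁻ y, edist x y ^ (-d) * g y ∂μ.withDensity f := lintegral_mono' hσ le_rfl
    _ = rieszPotential d (μ.withDensity fun y => f y * g y) x := by
        rw [rieszPotential_withDensity (by fun_prop),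
          lintegral_withDensity_eq_lintegral_mul _ hf (by fun_prop)]
        exact lintegral_congr fun y => mul_left_comm _ _ _

variable [SFinite μ]

lemma rieszPotential_restrict_ball_le_rpow (hμ : ∀ x, BallGrowthAt μ x A n) (hd : 0 < d)
    (hdn : d < n) {r : ℝ} (hr : 0 < r) (x y : X) :
    rieszPotential d (μ.restrict (ball x r)) y ≤
      (ENNReal.ofReal (d / (n - d)) + 1) * (A * ENNReal.ofReal r ^ n) *
        ENNReal.ofReal r ^ (-d) := by
  have small_radii : BallGrowthAt (μ.restrict (ball x r)) y A (d + (n - d)) := by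
    rw [add_sub_cancel]
    exact (hμ y).restrict (ball x r)
  have large_radii : BallGrowthAt (μ.restrict (ball x r)) y (A * ENNReal.ofReal r ^ n)
      (d - d) := by
    rw [sub_self]
    exact ballGrowthAt_zero (by simpa using hμ x r hr)
  calc rieszPotential d (μ.restrict (ball x r)) y
      ≤ ENNReal.ofReal (d / (n - d)) * (A * ENNReal.ofReal r ^ (n - d)) +
          ENNReal.ofReal (d / d) * (A * ENNReal.ofReal r ^ n * ENNReal.ofReal r ^ (-d)) :=
        rieszPotential_le_add small_radii large_radii hd (sub_pos.2 hdn) hd hr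
    _ = (ENNReal.ofReal (d / (n - d)) + 1) * (A * ENNReal.ofReal r ^ n) *
          ENNReal.ofReal r ^ (-d) := by
        have rpow_sub : ENNReal.ofReal r ^ (n - d) =
            ENNReal.ofReal r ^ n * ENNReal.ofReal r ^ (-d) := ofReal_rpow_add hr n (-d)
        rw [div_self hd.ne', ofReal_one, rpow_sub]
        ring

lemma rieszPotential_restrict_ball_le (hμ : ∀ x, BallGrowthAt μ x A n) (hd : 0 < d) (hdn : d < n)
    {r : ℝ} (hr : 0 < r) (x y : X) :
    rieszPotential d (μ.restrict (ball x r)) y ≤ rieszPotentialAOneConst A d n *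
      ENNReal.ofReal r ^ n * max (edist x y) (ENNReal.ofReal r) ^ (-d) := by
  set m := max (edist x y) (ENNReal.ofReal r)
  set c := ENNReal.ofReal (d / (n - d)) + 1
  have half_rpow : (m / 2) ^ (-d) = 2 ^ d * m ^ (-d) := by
    rw [div_eq_mul_inv, ENNReal.mul_rpow_of_ne_top (by finiteness) (by finiteness),
      ENNReal.inv_rpow, ENNReal.rpow_neg 2, inv_inv, mul_comm]
  suffices rieszPotential d (μ.restrict (ball x r)) y ≤
      c * (A * ENNReal.ofReal r ^ n) * (m / 2) ^ (-d) from
    this.trans_eq (by rw [half_rpow, rieszPotentialAOneConst]; ring)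
  rcases le_total (m / 2) (ENNReal.ofReal r) with near | far
  · refine (rieszPotential_restrict_ball_le_rpow hμ hd hdn hr x y).trans ?_
    gcongr _ * ?_
    exact rpow_neg_le_rpow_neg hd.le near
  · have half_le : ∀ z ∈ ball x r, m / 2 ≤ edist y z := fun z hz => by
      have triangle : m / 2 + m / 2 ≤ m / 2 + edist y z := by
        rw [ENNReal.add_halves]
        refine max_le ?_ (far.trans le_self_add)
        calc edist x y ≤ edist x z + edist y z := edist_triangle_right x y z
          _ ≤ m / 2 + edist y z := by
              gcongr
              rw [edist_dist, dist_comm]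
              exact (ofReal_le_ofReal (le_of_lt hz)).trans far
      exact (ENNReal.add_le_add_iff_left (by finiteness)).1 triangle
    calc rieszPotential d (μ.restrict (ball x r)) y
        ≤ μ (ball x r) * (m / 2) ^ (-d) :=
          rieszPotential_restrict_le_of_le_edist hd.le measurableSet_ball half_le
      _ ≤ c * (A * ENNReal.ofReal r ^ n) * (m / 2) ^ (-d) := by
          gcongr
          exact (hμ x r hr).trans (le_mul_of_one_le_left' le_add_self)

lemma lintegral_ball_rieszPotential_le [SFinite ν] (hμ : ∀ x, BallGrowthAt μ x A n) (hd : 0 < d)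
    (hdn : d < n) {r : ℝ} (hr : 0 < r) :
    ∫⁻ z in ball x r, rieszPotential d ν z ∂μ ≤ rieszPotentialAOneConst A d n *
      ENNReal.ofReal r ^ n * truncatedRieszPotential d r ν x :=
  calc ∫⁻ z in ball x r, rieszPotential d ν z ∂μ
      = ∫⁻ y, rieszPotential d (μ.restrict (ball x r)) y ∂ν := by
        simp_rw [rieszPotential]
        rw [lintegral_lintegral_swap (measurable_edist.pow_const _).aemeasurable]
        simp_rw [edist_comm]
    _ ≤ ∫⁻ y, rieszPotentialAOneConst A d n * ENNReal.ofReal r ^ n *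
          max (edist x y) (ENNReal.ofReal r) ^ (-d) ∂ν :=
        lintegral_mono fun y => rieszPotential_restrict_ball_le hμ hd hdn hr x y
    _ = rieszPotentialAOneConst A d n * ENNReal.ofReal r ^ n * truncatedRieszPotential d r ν x :=
        lintegral_const_mul _ (by fun_prop)

lemma ballGrowthAt_withDensity_rieszPotential [SFinite ν] (hμ : ∀ x, BallGrowthAt μ x A n)
    (hd : 0 < d) (hdn : d < n) :
    BallGrowthAt (μ.withDensity (rieszPotential d ν)) x
      (rieszPotentialAOneConst A d n * rieszPotential d ν x) n := fun r hr => by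
  rw [withDensity_apply _ measurableSet_ball]
  refine (lintegral_ball_rieszPotential_le hμ hd hdn hr).trans ?_
  rw [mul_right_comm]
  gcongr
  exact truncatedRieszPotential_le_rieszPotential hd.le

lemma BallGrowthAt.withDensity_rieszPotential [SFinite ν] (hν : BallGrowthAt ν x M s)
    (hμ : ∀ x, BallGrowthAt μ x A n) (hd : 0 < d) (hdn : d < n) (hs : s < d) :
    BallGrowthAt (μ.withDensity (rieszPotential d ν)) x
      (rieszPotentialAOneConst A d n * (ENNReal.ofReal (d / (d - s)) * M)) (n - d + s) :=
  fun r hr => by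
  have hν' : BallGrowthAt ν x M (d - (d - s)) := by rwa [_root_.sub_sub_cancel]
  calc μ.withDensity (rieszPotential d ν) (ball x r)
      = ∫⁻ z in ball x r, rieszPotential d ν z ∂μ := withDensity_apply _ measurableSet_ball
    _ ≤ rieszPotentialAOneConst A d n * ENNReal.ofReal r ^ n *
          truncatedRieszPotential d r ν x := lintegral_ball_rieszPotential_le hμ hd hdn hr
    _ ≤ rieszPotentialAOneConst A d n * ENNReal.ofReal r ^ n *
          (ENNReal.ofReal (d / (d - s)) * (M * ENNReal.ofReal r ^ (-(d - s)))) := by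
        gcongr
        exact truncatedRieszPotential_le hν' hd (sub_pos.2 hs) hr
    _ = rieszPotentialAOneConst A d n * (ENNReal.ofReal (d / (d - s)) * M) *
          ENNReal.ofReal r ^ (n - d + s) := by
        rw [sub_add, sub_eq_add_neg n, ofReal_rpow_add hr]
        ring

lemma ballGrowthAt_withDensity_rpow_mul_rieszPotential (hμ : ∀ x, BallGrowthAt μ x A n)
    (hd : 0 < d) (hdn : d < n) (hf : Measurable f) (hθ0 : 0 ≤ θ) (hθ1 : θ ≤ 1) :
    BallGrowthAt (μ.withDensity fun y => f y ^ θ * rieszPotential d (μ.withDensity f) y ^ (1 - θ))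
      x (rieszPotentialAOneConst A d n ^ (1 - θ) * rieszPotential d (μ.withDensity f) x)
      (d + (n - d) * (1 - θ)) := by
  convert (ballGrowthAt_rieszPotential hd.le).withDensity_rpow_mul_rpow hf
    (measurable_rieszPotential (ν := μ.withDensity f))
    (ballGrowthAt_withDensity_rieszPotential hμ hd hdn) hθ0 hθ1 using 1
  · rw [ENNReal.mul_rpow_of_nonneg _ _ (sub_nonneg.2 hθ1), mul_left_comm,
      ← ENNReal.rpow_add_of_nonneg _ _ hθ0 (sub_nonneg.2 hθ1), add_sub_cancel, ENNReal.rpow_one]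
  · ring

lemma BallGrowthAt.withDensity_rpow_mul_rieszPotential
    (h : BallGrowthAt (μ.withDensity f) x M s) (hμ : ∀ x, BallGrowthAt μ x A n) (hd : 0 < d)
    (hdn : d < n) (hs : s < d) (hf : Measurable f) (hθ0 : 0 ≤ θ) (hθ1 : θ ≤ 1) :
    BallGrowthAt (μ.withDensity fun y => f y ^ θ * rieszPotential d (μ.withDensity f) y ^ (1 - θ))
      x ((rieszPotentialAOneConst A d n * ENNReal.ofReal (d / (d - s))) ^ (1 - θ) * M)
      (s + (n - d) * (1 - θ)) := by
  convert h.withDensity_rpow_mul_rpow hf measurable_rieszPotential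
    (h.withDensity_rieszPotential hμ hd hdn hs) hθ0 hθ1 using 1
  · rw [← mul_assoc, ENNReal.mul_rpow_of_nonneg _ M (sub_nonneg.2 hθ1), mul_left_comm,
      ← ENNReal.rpow_add_of_nonneg _ _ hθ0 (sub_nonneg.2 hθ1), add_sub_cancel, ENNReal.rpow_one]
  · ring

lemma BallGrowthAt.ae_rieszPotential_ne_top [SFinite ν] (hν : BallGrowthAt ν x M s)
    (hμ : ∀ x, BallGrowthAt μ x A n) (hA : A ≠ ⊤) (hM : M ≠ ⊤) (hd : 0 < d) (hdn : d < n)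
    (hs : s < d) : ∀ᵐ y ∂μ, rieszPotential d ν y ≠ ⊤ :=
  (hν.withDensity_rieszPotential hμ hd hdn hs).ae_ne_top measurable_rieszPotential
    (mul_ne_top (rieszPotentialAOneConst_ne_top hA) (mul_ne_top ofReal_ne_top hM))

lemma rieszPotential_withDensity_rpow_mul_le (hμ : ∀ x, BallGrowthAt μ x A n) (hA : A ≠ ⊤)
    (hα0 : 0 < α) (hαn : α < n) (hθ0 : 0 < θ) (hθ1 : θ < 1) :
    ∃ C : ℝ≥0∞, C ≠ ⊤ ∧ ∀ (f : X → ℝ≥0∞) (M : ℝ≥0∞), Measurable f →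
      (∀ x, BallGrowthAt (μ.withDensity f) x M (n - α / θ)) → ∀ x,
      rieszPotential (n - α) (μ.withDensity fun y =>
        f y ^ θ * rieszPotential (n - α) (μ.withDensity f) y ^ (1 - θ)) x ≤
      C * M ^ θ * rieszPotential (n - α) (μ.withDensity f) x ^ (1 - θ) := by
  set d := n - α
  set s := n - α / θ
  set a := (n - d) * (1 - θ)
  set b := d - (s + a)
  set K := rieszPotentialAOneConst A d n
  have hd : 0 < d := sub_pos.2 hαn
  have hdn : d < n := sub_lt_self n hα0
  have hs : s < d := sub_lt_sub_left ((lt_div_iff₀ hθ0).2 (mul_lt_of_lt_one_right hα0 hθ1)) n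
  have hθ' : 0 < 1 - θ := sub_pos.2 hθ1
  have ha : 0 < a := mul_pos (sub_pos.2 hdn) hθ'
  have hab : a = θ * (d - s) := by
    simp only [a, d, s]
    field_simp
    ring
  have hb : b = (1 - θ) * (d - s) := by linear_combination -hab
  have hb0 : 0 < b := hb ▸ mul_pos hθ' (sub_pos.2 hs)
  have exponent_a : a / (a + b) = θ := by
    rw [hab, hb, ← add_mul, add_sub_cancel, one_mul, mul_div_cancel_right₀ _ (sub_pos.2 hs).ne']
  have exponent_b : b / (a + b) = 1 - θ := by
    rw [hab, hb, ← add_mul, add_sub_cancel, one_mul, mul_div_cancel_right₀ _ (sub_pos.2 hs).ne']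
  refine ⟨(ENNReal.ofReal (d / a) + ENNReal.ofReal (d / b)) * ((K ^ (1 - θ)) ^ (1 - θ) *
    ((K * ENNReal.ofReal (d / (d - s))) ^ (1 - θ)) ^ θ), ?_, fun f M hf hM x => ?_⟩
  · have hK : K ≠ ⊤ := rieszPotentialAOneConst_ne_top hA
    finiteness
  have small_radii := ballGrowthAt_withDensity_rpow_mul_rieszPotential (x := x) hμ hd hdn hf
    hθ0.le hθ1.le
  have large_radii := (hM x).withDensity_rpow_mul_rieszPotential hμ hd hdn hs hf hθ0.le hθ1.le
  rw [← _root_.sub_sub_cancel d (s + (n - d) * (1 - θ))] at large_radii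
  refine (rieszPotential_le_mul_rpow small_radii large_radii hd ha hb0).trans_eq ?_
  rw [exponent_a, exponent_b, ENNReal.mul_rpow_of_nonneg _ _ hθ0.le,
    ENNReal.mul_rpow_of_nonneg _ _ hθ'.le]
  ring

lemma lintegral_rieszPotential_le_of_ballGrowthAt (hμ : ∀ x, BallGrowthAt μ x A n) (hA : A ≠ ⊤)
    (hα0 : 0 < α) (hαn : α < n) (hθ0 : 0 < θ) (hθ1 : θ < 1) :
    ∃ C : ℝ≥0∞, C ≠ ⊤ ∧ ∀ (f : X → ℝ≥0∞) (M : ℝ≥0∞), Measurable f → M ≠ ⊤ →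
      (∀ x, BallGrowthAt (μ.withDensity f) x M (n - α / θ)) →
      ∀ (σ : Measure X) [SFinite σ], σ ≤ μ.withDensity (fun y => f y ^ θ) →
      ∫⁻ x, rieszPotential (n - α) σ x ∂σ ≤ C * M ^ θ * σ univ := by
  obtain ⟨C, hC, potential_le⟩ := rieszPotential_withDensity_rpow_mul_le hμ hA hα0 hαn hθ0 hθ1
  refine ⟨C, hC, fun f M hf hM growth σ _ hσ => ?_⟩
  set U := rieszPotential (n - α) (μ.withDensity f)
  have hα : α < α / θ := (lt_div_iff₀ hθ0).2 (mul_lt_of_lt_one_right hα0 hθ1)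
  have hσμ : σ ≪ μ :=
    hσ.absolutelyContinuous.trans (withDensity_absolutelyContinuous _ _)
  rcases eq_or_ne σ 0 with rfl | hσ0
  · simp only [lintegral_zero_measure, zero_le]
  have : NeZero σ := ⟨hσ0⟩
  obtain ⟨x₀⟩ : Nonempty X := Measure.nonempty_of_neZero σ
  have U_ne_zero (x : X) : U x ≠ 0 := fun hUx => hσ0 <| by
    have hf0 : f =ᵐ[μ] 0 := (withDensity_eq_zero_iff hf.aemeasurable).1
      (eq_zero_of_rieszPotential_eq_zero (sub_pos.2 hαn).le hUx)
    refine le_antisymm (hσ.trans_eq ?_) (Measure.zero_le σ)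
    rw [withDensity_eq_zero_iff (by fun_prop)]
    filter_upwards [hf0] with y hy
    simp [hy, hθ0]
  have U_ne_top : ∀ᵐ x ∂σ, U x ≠ ⊤ := hσμ.ae_le <|
    (growth x₀).ae_rieszPotential_ne_top hμ hA hM (sub_pos.2 hαn) (sub_lt_self n hα0)
      (sub_lt_sub_left hα n)
  refine lintegral_rieszPotential_le_of_schur (g := fun x => U x ^ (1 - θ)) hσ (hf.pow_const θ)
    (measurable_rieszPotential.pow_const _) ?_ ?_ (potential_le f M hf growth)
  · filter_upwards [U_ne_top] with x hx
    simp [ENNReal.rpow_eq_zero_iff, U_ne_zero x, hx]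
  · filter_upwards [U_ne_top] with x hx
    exact rpow_ne_top_of_ne_zero (U_ne_zero x) hx

end MorreySchur

section Cubes

variable {n : ℕ}

lemma cube_eq_preimage_Icc (a : Fin n → ℝ) (s : ℝ) :
    cube a s = WithLp.ofLp ⁻¹' Icc a fun i => a i + s := by
  ext x
  simp only [cube, mem_ofPred_eq, mem_preimage, mem_Icc, Pi.le_def, forall_and]

lemma volume_cube (a : Fin n → ℝ) (s : ℝ) : volume (cube a s) = ENNReal.ofReal s ^ (n : ℝ) := by
  rw [cube_eq_preimage_Icc, (PiLp.volume_preserving_ofLp (Fin n)).measure_preimage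
    measurableSet_Icc.nullMeasurableSet, Real.volume_Icc_pi]
  simp only [add_sub_cancel_left, Finset.prod_const, Finset.card_univ, Fintype.card_fin,
    ENNReal.rpow_natCast]

lemma ball_subset_cube (x : Euc n) (r : ℝ) : ball x r ⊆ cube (fun i => x i - r) (2 * r) := by
  intro y hy i
  have coord_le : |y i - x i| ≤ r :=
    calc |y i - x i| = ‖(y - x) i‖ := rfl
      _ ≤ ‖y - x‖ := PiLp.norm_apply_le _ i
      _ ≤ r := (mem_ball_iff_norm.1 hy).le
  have := abs_le.1 coord_le
  constructor <;> linarith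

lemma ballGrowthAt_volume (x : Euc n) : BallGrowthAt volume x (volume (ball (0 : Euc n) 1)) n :=
  fun r hr => by
  rw [Measure.addHaar_ball_of_pos _ _ hr, finrank_euclideanSpace_fin, ENNReal.ofReal_pow hr.le,
    ENNReal.rpow_natCast, mul_comm]

lemma setLIntegral_cube_rpow_le_morrey (hn : n ≠ 0) {α p s : ℝ} (hp : 0 < p) (hs : 0 < s)
    (w : Euc n → ℝ) (a : Fin n → ℝ) :
    ∫⁻ y in cube a s, ENNReal.ofReal (w y ^ p) ≤
      morrey n α p w ^ p * ENNReal.ofReal s ^ (n - α * p) := by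
  set I := ∫⁻ y in cube a s, ENNReal.ofReal (w y ^ p)
  set S := ENNReal.ofReal s
  have le_morrey : S ^ α * (S ^ (-n : ℝ) * I) ^ p⁻¹ ≤ morrey n α p w := by
    have hαn : n * (α / n) = α := mul_div_cancel₀ _ (Nat.cast_ne_zero.2 hn)
    rw [← one_div, ENNReal.rpow_neg, ← hαn, ENNReal.rpow_mul, hαn, ← volume_cube a s]
    exact le_iSup_of_le a (le_iSup₂_of_le s hs le_rfl)
  calc I = S ^ (n - α * p) * (S ^ (α * p + -n) * I) := by
        have cancel : n - α * p + (α * p + -n) = 0 := by ring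
        rw [← mul_assoc, ← ofReal_rpow_add hs, cancel, ENNReal.rpow_zero, one_mul]
    _ = S ^ (n - α * p) * (S ^ α * (S ^ (-n : ℝ) * I) ^ p⁻¹) ^ p := by
        rw [ENNReal.mul_rpow_of_nonneg _ _ hp.le, ENNReal.rpow_inv_rpow hp.ne',
          ← ENNReal.rpow_mul, ofReal_rpow_add hs]
        simp only [S, mul_assoc]
    _ ≤ morrey n α p w ^ p * S ^ (n - α * p) := by
        rw [mul_comm]
        gcongr

lemma ballGrowthAt_withDensity_rpow_morrey (hn : n ≠ 0) {α p : ℝ} (hp : 0 < p)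
    {w : Euc n → ℝ} (hw : 0 ≤ w) (x : Euc n) :
    BallGrowthAt (volume.withDensity fun y => ENNReal.ofReal (w y) ^ p) x
      (2 ^ (n - α * p) * morrey n α p w ^ p) (n - α * p) := fun r hr => by
  calc volume.withDensity (fun y => ENNReal.ofReal (w y) ^ p) (ball x r)
      = ∫⁻ y in ball x r, ENNReal.ofReal (w y) ^ p := withDensity_apply _ measurableSet_ball
    _ ≤ ∫⁻ y in cube (fun i => x i - r) (2 * r), ENNReal.ofReal (w y) ^ p :=
        lintegral_mono_set (ball_subset_cube x r)
    _ = ∫⁻ y in cube (fun i => x i - r) (2 * r), ENNReal.ofReal (w y ^ p) :=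
        lintegral_congr fun y => ENNReal.ofReal_rpow_of_nonneg (hw y) hp.le
    _ ≤ morrey n α p w ^ p * ENNReal.ofReal (2 * r) ^ (n - α * p) :=
        setLIntegral_cube_rpow_le_morrey hn hp (by positivity) w _
    _ = 2 ^ (n - α * p) * morrey n α p w ^ p * ENNReal.ofReal r ^ (n - α * p) := by
        rw [ENNReal.ofReal_mul zero_le_two, ENNReal.mul_rpow_of_ne_top (by finiteness)
          (by finiteness), ofReal_ofNat]
        ring

end Cubes

section KermanSawyer

lemma setLIntegral_setLIntegral_eq_lintegral_rieszPotential {n : ℕ} {α : ℝ} {w : Euc n → ℝ}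
    (hw : Measurable w) (Q : Set (Euc n)) :
    ∫⁻ x in Q, ∫⁻ y in Q,
        ENNReal.ofReal (w x) * ENNReal.ofReal (w y) * ENNReal.ofReal ‖x - y‖ ^ (α - n) =
      ∫⁻ x, rieszPotential (n - α)
          ((volume.withDensity fun y => ENNReal.ofReal (w y)).restrict Q) x
        ∂(volume.withDensity fun y => ENNReal.ofReal (w y)).restrict Q := by
  have hw' : Measurable fun y => ENNReal.ofReal (w y) := hw.ennreal_ofReal
  rw [restrict_withDensity', lintegral_withDensity_eq_lintegral_mul _ hw'
    measurable_rieszPotential]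
  refine lintegral_congr fun x => ?_
  rw [Pi.mul_apply, rieszPotential_withDensity hw', ← lintegral_const_mul _ (by fun_prop)]
  refine lintegral_congr fun y => ?_
  rw [neg_sub, edist_dist, dist_eq_norm]
  ring

theorem ksQ_le_morrey_general (n : ℕ) (α p : ℝ) (hα0 : 0 < α) (hαn : α < n) (hp1 : 1 < p) :
    ∃ C : ℝ≥0∞, 0 < C ∧ C < ⊤ ∧ ∀ w : Euc n → ℝ, 0 ≤ w → Measurable w → ∀ Q : Set (Euc n),
      (∫⁻ x in Q, ENNReal.ofReal (w x))⁻¹ * ∫⁻ x in Q, ∫⁻ y in Q,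
          ENNReal.ofReal (w x) * ENNReal.ofReal (w y) * ENNReal.ofReal ‖x - y‖ ^ (α - n) ≤
        C * morrey n α p w := by
  have hp : 0 < p := one_pos.trans hp1
  have hn : n ≠ 0 := Nat.cast_ne_zero.1 (hα0.trans hαn).ne'
  obtain ⟨C, hC, energy_le⟩ := lintegral_rieszPotential_le_of_ballGrowthAt
    (ballGrowthAt_volume (n := n)) measure_ball_lt_top.ne hα0 hαn (inv_pos.2 hp)
    (inv_lt_one_of_one_lt₀ hp1)
  set D := C * 2 ^ ((n - α * p) * p⁻¹)
  have hD : D ≠ ⊤ := by finiteness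
  refine ⟨D + 1, by simp, by finiteness, fun w hw hwm Q => ?_⟩
  rcases eq_or_ne (morrey n α p w) ⊤ with hm | hm
  · rw [hm, ENNReal.mul_top (by simp)]
    exact le_top
  set σ := (volume.withDensity fun y => ENNReal.ofReal (w y)).restrict Q
  have morrey_growth (x : Euc n) : BallGrowthAt (volume.withDensity fun y =>
      ENNReal.ofReal (w y) ^ p) x (2 ^ (n - α * p) * morrey n α p w ^ p) (n - α / p⁻¹) := by
    rw [div_inv_eq_mul]
    exact ballGrowthAt_withDensity_rpow_morrey hn hp hw x
  have hσ : σ ≤ volume.withDensity fun y => (ENNReal.ofReal (w y) ^ p) ^ p⁻¹ := by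
    simpa only [ENNReal.rpow_rpow_inv hp.ne'] using Measure.restrict_le_self
  rw [setLIntegral_setLIntegral_eq_lintegral_rieszPotential hwm, mul_comm, ← div_eq_mul_inv]
  refine ENNReal.div_le_of_le_mul ?_
  calc ∫⁻ x, rieszPotential (n - α) σ x ∂σ
      ≤ C * (2 ^ (n - α * p) * morrey n α p w ^ p) ^ p⁻¹ * σ univ :=
        energy_le _ _ (hwm.ennreal_ofReal.pow_const p) (by finiteness) morrey_growth σ hσ
    _ = D * morrey n α p w * ∫⁻ x in Q, ENNReal.ofReal (w x) := by
        rw [Measure.restrict_apply_univ, withDensity_apply',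
          ENNReal.mul_rpow_of_nonneg _ _ (inv_pos.2 hp).le, ENNReal.rpow_rpow_inv hp.ne',
          ← ENNReal.rpow_mul, ← mul_assoc]
    _ ≤ (D + 1) * morrey n α p w * ∫⁻ x in Q, ENNReal.ofReal (w x) := by
        gcongr
        exact le_self_add

end KermanSawyer

/-- The Kerman–Sawyer quantity is controlled by the Morrey norm, for `p > 1`. -/
theorem ksQ_le_morrey (n : ℕ) (hn : 1 ≤ n) (α p : ℝ) (hα0 : 0 < α) (hαn : α < n)
    (hp1 : 1 < p) (hpn : p ≤ n / α) :
    ∃ C : ℝ≥0∞, 0 < C ∧ C < ⊤ ∧ ∀ w : Euc n → ℝ, 0 ≤ w → Measurable w →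
      ksQ n α w ≤ C * morrey n α p w := by
  obtain ⟨C, hC0, hC, general⟩ := ksQ_le_morrey_general n α p hα0 hαn hp1
  exact ⟨C, hC0, hC, fun w hw hwm => iSup₂_le fun _ _ => general w hw hwm _⟩
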